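/- arXiv:2207.04052 — 7 statements merged into one kernel-verified Lean document; each statement's English description precedes it below -/
import Mathlib

section
/- The point (π*, κ*, θ₁*, θ₂*) with π* = ι/(2σ) + ρ(λ−a+ρbι)/(2(1−ρ²)σb), κ* = (λ−a+ρbι)/(2(1−ρ²)b²), θ₁* = −ι/2, θ₂* = (λ−a+ρbι)/(2√(1−ρ²)·b) is a saddle point of F, i.e. F(π, κ, θ₁*, θ₂*) ≤ F(π*, κ*, θ₁*, θ₂*) ≤ F(π*, κ*, θ₁, θ₂) for all real π, κ, θ₁, θ₂. Consequently sup over (π,κ) of inf over (θ₁,θ₂) of F equals inf over (θ₁,θ₂) of sup over (π,κ) of F, both being attained at (π*, κ*, θ₁*, θ₂*), with common value F(π*, κ*, θ₁*, θ₂*) = (1/4)·[ι² + (λ−a+ρbι)²/((1−ρ²)b²)]. -/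
lemma iSup2_eq_aux (f : ℝ → ℝ → ℝ) (m x0 y0 : ℝ) (h : ∀ x y, f x y ≤ m) (h0 : f x0 y0 = m) :
    (⨆ x : ℝ, ⨆ y : ℝ, f x y) = m := by
  have h1 : ∀ x, (⨆ y : ℝ, f x y) ≤ m := fun x => ciSup_le (h x)
  apply le_antisymm (ciSup_le h1)
  have h2 : f x0 y0 ≤ ⨆ y : ℝ, f x0 y :=
    le_ciSup (f := fun y => f x0 y) ⟨m, by rintro _ ⟨y, rfl⟩; exact h x0 y⟩ y0
  have h3 : (⨆ y : ℝ, f x0 y) ≤ ⨆ x : ℝ, ⨆ y : ℝ, f x y :=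
    le_ciSup (f := fun x => ⨆ y : ℝ, f x y) ⟨m, by rintro _ ⟨x, rfl⟩; exact h1 x⟩ x0
  linarith

lemma iInf2_eq_aux (f : ℝ → ℝ → ℝ) (m x0 y0 : ℝ) (h : ∀ x y, m ≤ f x y) (h0 : f x0 y0 = m) :
    (⨅ x : ℝ, ⨅ y : ℝ, f x y) = m := by
  have h1 : ∀ x, m ≤ (⨅ y : ℝ, f x y) := fun x => le_ciInf (h x)
  apply le_antisymm _ (le_ciInf h1)
  have h2 : (⨅ y : ℝ, f x0 y) ≤ f x0 y0 :=
    ciInf_le (f := fun y => f x0 y) ⟨m, by rintro _ ⟨y, rfl⟩; exact h x0 y⟩ y0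
  have h3 : (⨅ x : ℝ, ⨅ y : ℝ, f x y) ≤ ⨅ y : ℝ, f x0 y :=
    ciInf_le (f := fun x => ⨅ y : ℝ, f x y) ⟨m, by rintro _ ⟨x, rfl⟩; exact h1 x⟩ x0
  linarith

/-- **Saddle point of the robust objective (small insurer, continuous case).**
With `ι = (μ₀ − r)/σ`, the point
`π* = ι/(2σ) + ρ(λ−a+ρbι)/(2(1−ρ²)σb)`, `κ* = (λ−a+ρbι)/(2(1−ρ²)b²)`,
`θ₁* = −ι/2`, `θ₂* = (λ−a+ρbι)/(2√(1−ρ²)b)` is a saddle point of `F`;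
consequently `sup_{π,κ} inf_{θ₁,θ₂} F = inf_{θ₁,θ₂} sup_{π,κ} F`, both attained there,
with common value `(1/4)[ι² + (λ−a+ρbι)²/((1−ρ²)b²)]`. -/
theorem robust_saddle_point
    (μ₀ r lam a σ b ρ : ℝ)
    (hσ : 0 < σ) (hb : 0 < b) (hρ₁ : -1 < ρ) (hρ₂ : ρ < 1)
    (ι : ℝ) (hι : ι = (μ₀ - r) / σ)
    (F : ℝ → ℝ → ℝ → ℝ → ℝ)
    (hF : ∀ π κ θ₁ θ₂ : ℝ, F π κ θ₁ θ₂ =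
      (μ₀ - r) * π + (lam - a) * κ
        - (1/2) * ((σ*π - ρ*b*κ)^2 + (1 - ρ^2) * b^2 * κ^2)
        + (σ*π - ρ*b*κ) * θ₁ - Real.sqrt (1 - ρ^2) * b * κ * θ₂
        + (1/2) * (θ₁^2 + θ₂^2))
    (πs κs θ₁s θ₂s : ℝ)
    (hπs : πs = ι / (2*σ) + ρ * (lam - a + ρ*b*ι) / (2 * (1 - ρ^2) * σ * b))
    (hκs : κs = (lam - a + ρ*b*ι) / (2 * (1 - ρ^2) * b^2))
    (hθ₁s : θ₁s = -ι / 2)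
    (hθ₂s : θ₂s = (lam - a + ρ*b*ι) / (2 * Real.sqrt (1 - ρ^2) * b)) :
    (∀ π κ : ℝ, F π κ θ₁s θ₂s ≤ F πs κs θ₁s θ₂s) ∧
    (∀ θ₁ θ₂ : ℝ, F πs κs θ₁s θ₂s ≤ F πs κs θ₁ θ₂) ∧
    (⨆ π : ℝ, ⨆ κ : ℝ, ⨅ θ₁ : ℝ, ⨅ θ₂ : ℝ, F π κ θ₁ θ₂) = F πs κs θ₁s θ₂s ∧
    (⨅ θ₁ : ℝ, ⨅ θ₂ : ℝ, ⨆ π : ℝ, ⨆ κ : ℝ, F π κ θ₁ θ₂) = F πs κs θ₁s θ₂s ∧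
    F πs κs θ₁s θ₂s = (1/4) * (ι^2 + (lam - a + ρ*b*ι)^2 / ((1 - ρ^2) * b^2)) := by
  have hq : 0 < 1 - ρ^2 := by nlinarith
  obtain ⟨s, hs⟩ : ∃ s, s = Real.sqrt (1 - ρ^2) := ⟨_, rfl⟩
  have hs0 : 0 < s := hs ▸ Real.sqrt_pos.mpr hq
  have hs2 : 1 - ρ^2 = s^2 := by rw [hs, Real.sq_sqrt hq.le]
  rw [← hs] at hθ₂s
  simp only [← hs] at hF
  rw [hs2] at hπs hκs ⊢
  simp only [hs2] at hF
  obtain ⟨c, hc⟩ : ∃ c, c = (lam - a + ρ*b*ι) / (s * b) := ⟨_, rfl⟩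
  have hc' : lam - a = c * (s * b) - ρ*b*ι := by rw [hc]; field_simp; ring
  have hι' : μ₀ - r = ι * σ := by rw [hι]; field_simp
  have hF' : ∀ π κ θ₁ θ₂ : ℝ, F π κ θ₁ θ₂ =
      ι * (σ*π - ρ*b*κ) + c * (s*b*κ) - (1/2) * ((σ*π - ρ*b*κ)^2 + (s*b*κ)^2)
        + (σ*π - ρ*b*κ) * θ₁ - (s*b*κ) * θ₂ + (1/2) * (θ₁^2 + θ₂^2) := by
    intro π κ θ₁ θ₂
    rw [hF, hc', hι']; ring
  have hsur : ∀ x y : ℝ, ∃ π κ : ℝ, σ*π - ρ*b*κ = x ∧ s*b*κ = y := by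
    intro x y
    refine ⟨(x + ρ*b*(y/(s*b)))/σ, y/(s*b), ?_, ?_⟩
    · field_simp; ring
    · field_simp
  have hy : s*b*κs = c/2 := by rw [hκs, hc]; field_simp
  have hx : σ*πs - ρ*b*κs = ι/2 := by rw [hπs, hκs]; field_simp; ring
  have ht2 : θ₂s = c/2 := by rw [hθ₂s, hc]; field_simp
  have hval : F πs κs θ₁s θ₂s = (1/4) * (ι^2 + c^2) := by
    rw [hF', hx, hy, hθ₁s, ht2]; ring
  refine ⟨?_, ?_, ?_, ?_, ?_⟩
  · intro π κ
    rw [hval, hF', hθ₁s, ht2]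
    generalize σ*π - ρ*b*κ = x
    generalize s*b*κ = y
    linarith only [sq_nonneg (x - ι/2), sq_nonneg (y - c/2)]
  · intro θ₁ θ₂
    rw [hval, hF', hx, hy]
    linarith only [sq_nonneg (θ₁ + ι/2), sq_nonneg (θ₂ - c/2)]
  · have hinf : ∀ π κ : ℝ, (⨅ θ₁ : ℝ, ⨅ θ₂ : ℝ, F π κ θ₁ θ₂) =
        ι * (σ*π - ρ*b*κ) + c * (s*b*κ) - ((σ*π - ρ*b*κ)^2 + (s*b*κ)^2) := by
      intro π κ
      apply iInf2_eq_aux _ _ (-(σ*π - ρ*b*κ)) (s*b*κ)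
      · intro θ₁ θ₂
        rw [hF']
        generalize σ*π - ρ*b*κ = x
        generalize s*b*κ = y
        linarith only [sq_nonneg (θ₁ + x), sq_nonneg (θ₂ - y)]
      · rw [hF']; ring
    simp only [hinf]
    rw [hval]
    apply iSup2_eq_aux _ _ πs κs
    · intro π κ
      generalize σ*π - ρ*b*κ = x
      generalize s*b*κ = y
      linarith only [sq_nonneg (x - ι/2), sq_nonneg (y - c/2)]
    · rw [hx, hy]; ring
  · have hsup : ∀ θ₁ θ₂ : ℝ, (⨆ π : ℝ, ⨆ κ : ℝ, F π κ θ₁ θ₂) =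
        (1/2) * ((ι + θ₁)^2 + (c - θ₂)^2 + θ₁^2 + θ₂^2) := by
      intro θ₁ θ₂
      obtain ⟨π0, κ0, h1, h2⟩ := hsur (ι + θ₁) (c - θ₂)
      apply iSup2_eq_aux _ _ π0 κ0
      · intro π κ
        rw [hF']
        generalize σ*π - ρ*b*κ = x
        generalize s*b*κ = y
        linarith only [sq_nonneg (x - (ι + θ₁)), sq_nonneg (y - (c - θ₂))]
      · rw [hF', h1, h2]; ring
    simp only [hsup]
    rw [hval]
    apply iInf2_eq_aux _ _ (-ι/2) (c/2)
    · intro θ₁ θ₂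
      linarith only [sq_nonneg (θ₁ + ι/2), sq_nonneg (θ₂ - c/2)]
    · ring
  · rw [hval, hc, div_pow, mul_pow]
end

section
/- The function G is strictly concave on ℝ² and attains its unique global maximum at π* = ι/σ + ρ(λ−a+ρbι)/((1−ρ²)σb), κ* = (λ−a+ρbι)/((1−ρ²)b²), with maximum value G(π*, κ*) = (1/2)·[ι² + (λ−a+ρbι)²/((1−ρ²)b²)]. -/
/-- **The non-robust objective is strictly concave with a unique global maximum.**
With `ι = (μ₀ − r)/σ`, the function
`G(π,κ) = (μ₀−r)π + (λ−a)κ − (1/2)[(σπ−ρbκ)² + (1−ρ²)b²κ²]`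
is strictly concave on `ℝ²` and attains its unique global maximum at
`π* = ι/σ + ρ(λ−a+ρbι)/((1−ρ²)σb)`, `κ* = (λ−a+ρbι)/((1−ρ²)b²)`,
with maximum value `(1/2)[ι² + (λ−a+ρbι)²/((1−ρ²)b²)]`. -/
theorem nonrobust_objective_strict_concave_unique_max
    (μ₀ r lam a σ b ρ : ℝ)
    (hσ : 0 < σ) (hb : 0 < b) (hρ₁ : -1 < ρ) (hρ₂ : ρ < 1)
    (ι : ℝ) (hι : ι = (μ₀ - r) / σ)
    (G : ℝ → ℝ → ℝ)
    (hG : ∀ π κ : ℝ, G π κ =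
      (μ₀ - r) * π + (lam - a) * κ
        - (1/2) * ((σ*π - ρ*b*κ)^2 + (1 - ρ^2) * b^2 * κ^2))
    (πs κs : ℝ)
    (hπs : πs = ι / σ + ρ * (lam - a + ρ*b*ι) / ((1 - ρ^2) * σ * b))
    (hκs : κs = (lam - a + ρ*b*ι) / ((1 - ρ^2) * b^2)) :
    StrictConcaveOn ℝ Set.univ (fun p : ℝ × ℝ => G p.1 p.2) ∧
    (∀ π κ : ℝ, (π, κ) ≠ (πs, κs) → G π κ < G πs κs) ∧
    G πs κs = (1/2) * (ι^2 + (lam - a + ρ*b*ι)^2 / ((1 - ρ^2) * b^2)) := by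
  have hc : 0 < 1 - ρ^2 := by nlinarith
  have hQ : ∀ x y : ℝ, (x, y) ≠ (0, 0) →
      0 < (σ*x - ρ*b*y)^2 + (1 - ρ^2) * b^2 * y^2 := by
    intro x y h
    by_cases hy : y = 0
    · subst hy
      have hx : x ≠ 0 := fun hx => h (by rw [hx])
      have : 0 < (σ*x)^2 := by positivity
      simpa using this
    · have : 0 < (1 - ρ^2) * b^2 * y^2 := by positivity
      have := sq_nonneg (σ*x - ρ*b*y)
      linarith
  have h1 : μ₀ - r = σ * ι := by rw [hι]; field_simp
  have h2 : lam - a + ρ*b*ι = (1 - ρ^2) * b^2 * κs := by rw [hκs]; field_simp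
  have h3 : ι = σ * πs - ρ * b * κs := by
    rw [hπs, h2]; field_simp; ring
  have h4 : lam - a = (1 - ρ^2) * b^2 * κs - ρ * b * ι := by linarith
  refine ⟨⟨convex_univ, ?_⟩, ?_, ?_⟩
  · rintro ⟨x1, x2⟩ - ⟨y1, y2⟩ - hxy s t hs ht hst
    have hq := hQ (x1 - y1) (x2 - y2) (by
      intro h
      apply hxy
      simp only [Prod.mk.injEq, sub_eq_zero] at h
      rw [h.1, h.2])
    have hp := mul_pos (mul_pos hs ht) hq
    obtain rfl : t = 1 - s := by linarith
    simp only [Prod.smul_mk, Prod.mk_add_mk, smul_eq_mul, hG]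
    linarith
  · intro x y hxy
    have hq := hQ (x - πs) (y - κs) (by
      intro h
      apply hxy
      simp only [Prod.mk.injEq, sub_eq_zero] at h
      rw [h.1, h.2])
    rw [hG, hG, h1, h4, h3]
    linarith
  · have h5 : ((1 - ρ^2) * b^2 * κs)^2 / ((1 - ρ^2) * b^2) = (1 - ρ^2) * b^2 * κs^2 := by
      field_simp
    rw [h2, h5, hG, h1, h4, h3]
    ring
end

section
/- The function G̃ is strictly concave on ℝ² and attains its unique global maximum at π* = [(1−ρ²)φ̃₁ + ρ√(1−ρ²)·φ̃₂]/(σ̃ − ρ²σ), κ* = [√(1−ρ²)·φ̃₂ + ρ(σ/σ̃ − 1)φ̃₁]/((1 − ρ²σ/σ̃)·b), and the maximum value equals (1/2)·(1/(1 − ρ²σ/σ̃))·[((1−2ρ²)σ/σ̃ + ρ²)·φ̃₁² + 2ρ√(1−ρ²)·(σ/σ̃ − 1)·φ̃₁φ̃₂ + (1−ρ²)·φ̃₂²]. -/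
/-- **Large-insurer objective: strict concavity and unique maximum.**
With `σ̃ = σ − 2ϱ/σ > ρ²σ`, the function
`G̃(π,κ) = σφ̃₁π + ϱπ² + (√(1−ρ²)bφ̃₂ − ρbφ̃₁)κ − (1/2)(σπ−ρbκ)² − (1/2)(1−ρ²)b²κ²`
is strictly concave on `ℝ²` and attains its unique global maximum at
`π* = [(1−ρ²)φ̃₁ + ρ√(1−ρ²)φ̃₂]/(σ̃ − ρ²σ)`,
`κ* = [√(1−ρ²)φ̃₂ + ρ(σ/σ̃ − 1)φ̃₁]/((1 − ρ²σ/σ̃)b)`, with the stated maximum value. -/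
theorem large_insurer_objective_strict_concave_unique_max
    (σ b ρ ϱ : ℝ)
    (hσ : 0 < σ) (hb : 0 < b) (hρ₁ : -1 < ρ) (hρ₂ : ρ < 1)
    (hϱ₀ : 0 ≤ ϱ) (hϱ : ϱ < σ^2 / 2)
    (σt : ℝ) (hσt : σt = σ - 2*ϱ/σ) (hσtρ : ρ^2 * σ < σt)
    (φ₁ φ₂ : ℝ)
    (G : ℝ → ℝ → ℝ)
    (hG : ∀ π κ : ℝ, G π κ =
      σ*φ₁*π + ϱ*π^2 + (Real.sqrt (1 - ρ^2)*b*φ₂ - ρ*b*φ₁)*κ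
        - (1/2)*(σ*π - ρ*b*κ)^2 - (1/2)*(1 - ρ^2)*b^2*κ^2)
    (πs κs : ℝ)
    (hπs : πs = ((1 - ρ^2)*φ₁ + ρ*Real.sqrt (1 - ρ^2)*φ₂) / (σt - ρ^2*σ))
    (hκs : κs = (Real.sqrt (1 - ρ^2)*φ₂ + ρ*(σ/σt - 1)*φ₁) / ((1 - ρ^2*σ/σt)*b)) :
    StrictConcaveOn ℝ Set.univ (fun p : ℝ × ℝ => G p.1 p.2) ∧
    (∀ π κ : ℝ, (π, κ) ≠ (πs, κs) → G π κ < G πs κs) ∧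
    G πs κs = (1/2) * (1/(1 - ρ^2*σ/σt)) *
      (((1 - 2*ρ^2)*σ/σt + ρ^2)*φ₁^2
        + 2*ρ*Real.sqrt (1 - ρ^2)*(σ/σt - 1)*φ₁*φ₂
        + (1 - ρ^2)*φ₂^2) := by
  have hD : 0 < σt - ρ^2*σ := by linarith
  have ht : 0 < σt := lt_of_le_of_lt (by positivity) hσtρ
  have hr : ϱ = σ*(σ-σt)/2 := by
    rw [hσt]; field_simp; ring
  have hs : Real.sqrt (1 - ρ^2)^2 = 1 - ρ^2 := Real.sq_sqrt (by nlinarith)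
  clear hσt
  generalize Real.sqrt (1 - ρ^2) = s at *
  have hpos : ∀ u v : ℝ, (u ≠ 0 ∨ v ≠ 0) →
      0 < (b*v - ρ*σ*u)^2 + σ*(σt - ρ^2*σ)*u^2 := by
    intro u v h
    by_cases hu : u = 0
    · subst hu
      have hv : v ≠ 0 := by simpa using h
      have : 0 < (b*v)^2 := by positivity
      simpa using this
    · have : 0 < σ*(σt - ρ^2*σ)*u^2 := by positivity
      have := sq_nonneg (b*v - ρ*σ*u)
      linarith
  have hπ : πs * (σt - ρ^2*σ) = (1 - ρ^2)*φ₁ + ρ*s*φ₂ := by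
    rw [hπs]; field_simp
  have hden : 1 - ρ^2*σ/σt = (σt - ρ^2*σ)/σt := by field_simp
  have hκ : b * κs * (σt - ρ^2*σ) = s*φ₂*σt + ρ*(σ-σt)*φ₁ := by
    rw [hκs, hden]; field_simp
  have f1 : φ₁ = σt*πs - ρ*(b*κs) := by
    apply mul_right_cancel₀ hD.ne'
    linear_combination (-σt)*hπ + ρ*hκ
  have f2 : s*φ₂ - ρ*φ₁ = b*κs - ρ*σ*πs := by
    apply mul_right_cancel₀ hD.ne'
    linear_combination ρ*σ*hπ - hκ
  have hdiff : ∀ π κ : ℝ, G π κ = G πs κs -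
      (1/2)*((b*(κ-κs) - ρ*σ*(π-πs))^2 + σ*(σt - ρ^2*σ)*(π-πs)^2) := by
    intro π κ
    rw [hG, hG, hr]
    linear_combination σ*(π-πs)*f1 + b*(κ-κs)*f2
  refine ⟨⟨convex_univ, ?_⟩, ?_, ?_⟩
  · rintro ⟨x1, x2⟩ - ⟨y1, y2⟩ - hne a c ha hc hac
    have h := hpos (x1-y1) (x2-y2) (by
      by_contra! hh
      exact hne (Prod.ext (sub_eq_zero.1 hh.1) (sub_eq_zero.1 hh.2)))
    have h2 := mul_pos (mul_pos ha hc) h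
    obtain rfl : c = 1 - a := by linarith
    simp only [Prod.smul_mk, Prod.mk_add_mk, smul_eq_mul]
    rw [hG, hG, hG, hr]
    rw [← sub_pos]
    refine lt_of_lt_of_eq (half_pos h2) ?_
    ring
  · intro π κ hne
    have h := hpos (π-πs) (κ-κs) (by
      by_contra! hh
      exact hne (Prod.ext (sub_eq_zero.1 hh.1) (sub_eq_zero.1 hh.2)))
    rw [hdiff π κ]
    linarith
  · have hv : G πs κs = (1/2)*(σ*φ₁*πs + (s*φ₂ - ρ*φ₁)*(b*κs)) := by
      rw [hG, hr]
      linear_combination (1/2)*σ*πs*f1 + (1/2)*b*κs*f2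
    rw [hv, hden]
    have e : (1/2) * (1/((σt - ρ^2*σ)/σt)) *
      (((1 - 2*ρ^2)*σ/σt + ρ^2)*φ₁^2
        + 2*ρ*s*(σ/σt - 1)*φ₁*φ₂
        + (1 - ρ^2)*φ₂^2) = (1/2)*(((1 - 2*ρ^2)*σ + ρ^2*σt)*φ₁^2
        + 2*ρ*s*(σ - σt)*φ₁*φ₂
        + (1 - ρ^2)*σt*φ₂^2)/(σt - ρ^2*σ) := by
      field_simp
    rw [e, eq_div_iff hD.ne']
    linear_combination (1/2)*σ*φ₁*hπ + (1/2)*(s*φ₂ - ρ*φ₁)*hκ + (1/2)*σt*φ₂^2*hs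
end

section
/- For every y > 0 there is at most one x > 0 with U′(x) = y·e^{U(x)} (equivalently, at most one fixed point of x ↦ I(y·e^{U(x)}) where I is the inverse of U′); if moreover U′(x)·e^{−U(x)} → ∞ as x → 0⁺ and U′(x)·e^{−U(x)} → 0 as x → ∞, then for every y > 0 there is exactly one such x, denoted Ĩ(y), and Ĩ : (0,∞) → (0,∞) is strictly decreasing. In particular, for U = log one has Ĩ(y) = 1/√y for every y > 0. -/
open Set Filter

/-- **The fixed point function of the inverse marginal utility.**
Let `U` be a utility function on `(0,∞)` (continuously differentiable, strictly increasing,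
with strictly decreasing derivative `U'`). Then for every `y > 0` there is at most one
`x > 0` with `U'(x) = y·e^{U(x)}`; if moreover `U'(x)e^{−U(x)} → ∞` as `x → 0⁺` and
`U'(x)e^{−U(x)} → 0` as `x → ∞`, there is exactly one such `x =: Ĩ(y)`, and
`Ĩ : (0,∞) → (0,∞)` is strictly decreasing. In particular, for `U = log`,
`Ĩ(y) = 1/√y`. -/
theorem fixed_point_function_of_inverse_marginal_utility
    (U U' : ℝ → ℝ)
    (hderiv : ∀ x ∈ Ioi (0:ℝ), HasDerivAt U (U' x) x)
    (hcont : ContinuousOn U' (Ioi (0:ℝ)))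
    (hmono : StrictMonoOn U (Ioi (0:ℝ)))
    (hanti : StrictAntiOn U' (Ioi (0:ℝ))) :
    (∀ y : ℝ, 0 < y → ∀ x₁ ∈ Ioi (0:ℝ), ∀ x₂ ∈ Ioi (0:ℝ),
      U' x₁ = y * Real.exp (U x₁) → U' x₂ = y * Real.exp (U x₂) → x₁ = x₂) ∧
    ((Tendsto (fun x => U' x * Real.exp (-(U x))) (nhdsWithin 0 (Ioi 0)) atTop) →
      (Tendsto (fun x => U' x * Real.exp (-(U x))) atTop (nhds 0)) →
      ∃ Itil : ℝ → ℝ,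
        (∀ y : ℝ, 0 < y → 0 < Itil y ∧ U' (Itil y) = y * Real.exp (U (Itil y))) ∧
        StrictAntiOn Itil (Ioi (0:ℝ))) ∧
    ((∀ t ∈ Ioi (0:ℝ), U t = Real.log t) →
      ∀ y : ℝ, 0 < y →
        0 < 1 / Real.sqrt y ∧
        U' (1 / Real.sqrt y) = y * Real.exp (U (1 / Real.sqrt y))) := by
  have key : ∀ y₁ y₂ x₁ x₂ : ℝ, 0 < y₁ → 0 < x₁ → 0 < x₂ → U' x₁ = y₁ * Real.exp (U x₁) →
      U' x₂ = y₂ * Real.exp (U x₂) → x₁ < x₂ → y₂ < y₁ := by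
    intro y₁ y₂ x₁ x₂ hy hx₁ hx₂ h₁ h₂ hlt
    have a := hanti hx₁ hx₂ hlt
    have b := Real.exp_lt_exp.mpr (hmono hx₁ hx₂ hlt)
    rw [h₁, h₂] at a
    have c := mul_lt_mul_of_pos_left b hy
    exact lt_of_mul_lt_mul_right (a.trans c) (Real.exp_pos _).le
  refine ⟨?_, ?_, ?_⟩
  · intro y hy x₁ hx₁ x₂ hx₂ h₁ h₂
    rcases lt_trichotomy x₁ x₂ with h | h | h
    · exact absurd (key y y x₁ x₂ hy hx₁ hx₂ h₁ h₂ h) (lt_irrefl _)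
    · exact h
    · exact absurd (key y y x₂ x₁ hy hx₂ hx₁ h₂ h₁ h) (lt_irrefl _)
  · intro h0 hinf
    have hU : ContinuousOn U (Ioi (0:ℝ)) := fun x hx =>
      (hderiv x hx).continuousAt.continuousWithinAt
    have hg : ContinuousOn (fun x => U' x * Real.exp (-(U x))) (Ioi (0:ℝ)) :=
      hcont.mul (Real.continuous_exp.comp_continuousOn hU.neg)
    have hsub := isPreconnected_Ioi.intermediate_value_Ioi
      (le_principal_iff.mpr (Ioi_mem_atTop (0:ℝ)))
      (le_principal_iff.mpr (self_mem_nhdsWithin (a := (0:ℝ)))) hg hinf h0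
    have hex : ∀ y : ℝ, ∃ x : ℝ, 0 < y → 0 < x ∧ U' x = y * Real.exp (U x) := by
      intro y
      by_cases hy : 0 < y
      · obtain ⟨x, hx, hxy⟩ := hsub hy
        refine ⟨x, fun _ => ⟨hx, ?_⟩⟩
        simp only at hxy
        rw [← hxy, mul_assoc, ← Real.exp_add]
        simp
      · exact ⟨0, fun h => absurd h hy⟩
    choose J hJ using hex
    refine ⟨J, hJ, ?_⟩
    intro a ha b hb hab
    by_contra! hle
    rcases hle.lt_or_eq with h | h
    · exact absurd (key a b _ _ ha (hJ a ha).1 (hJ b hb).1 (hJ a ha).2 (hJ b hb).2 h) hab.not_gt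
    · have e₁ := (hJ a ha).2
      have e₂ := (hJ b hb).2
      rw [← h, e₁] at e₂
      exact hab.ne (mul_right_cancel₀ (Real.exp_pos _).ne' e₂)
  · intro hlog y hy
    have hs : 0 < Real.sqrt y := Real.sqrt_pos.mpr hy
    have hp : 0 < 1 / Real.sqrt y := by positivity
    refine ⟨hp, ?_⟩
    have hev : U =ᶠ[nhds (1 / Real.sqrt y)] Real.log :=
      Filter.mem_of_superset (Ioi_mem_nhds hp) hlog
    have hd := (Real.hasDerivAt_log hp.ne').congr_of_eventuallyEq hev
    rw [(hderiv _ hp).unique hd, hlog _ hp, Real.exp_log hp]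
    have := Real.mul_self_sqrt hy.le
    field_simp
    nlinarith
end

section
/- The function ΔV : (T, ∞) → ℝ defined by ΔV(T₀) = −(1/2)·log(1 − T²/(2T₀−T)²) + T/(2(2T₀−T)) + K/(4(2T₀−T)) is strictly positive on (T, ∞), strictly decreasing on (T, ∞), and tends to 0 as T₀ → ∞. -/
open Set Filter

/-- **Utility gain from insider information is positive and decreasing in the future time.**
For `T > 0` and `K ≥ 0`, the function
`ΔV(T₀) = −(1/2)log(1 − T²/(2T₀−T)²) + T/(2(2T₀−T)) + K/(4(2T₀−T))` on `(T, ∞)`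
is strictly positive, strictly decreasing, and tends to `0` as `T₀ → ∞`. -/
theorem insider_utility_gain_positive_decreasing
    (T K : ℝ) (hT : 0 < T) (hK : 0 ≤ K)
    (ΔV : ℝ → ℝ)
    (hΔV : ∀ T₀ : ℝ, T < T₀ →
      ΔV T₀ = -(1/2) * Real.log (1 - T^2/(2*T₀ - T)^2)
        + T/(2*(2*T₀ - T)) + K/(4*(2*T₀ - T))) :
    (∀ T₀ : ℝ, T < T₀ → 0 < ΔV T₀) ∧
    StrictAntiOn ΔV (Ioi T) ∧
    Tendsto ΔV atTop (nhds 0) := by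
  have hpos : ∀ x : ℝ, T < x → 0 < 1 - T^2/(2*x - T)^2 := by
    intro x hx
    have h1 : 0 < 2*x - T := by linarith
    have h2 : T^2/(2*x - T)^2 < 1 := by
      rw [div_lt_one (by positivity)]
      nlinarith
    linarith
  refine ⟨?_, ?_, ?_⟩
  · intro x hx
    rw [hΔV x hx]
    have h1 : 0 < 2*x - T := by linarith
    have h2 : 0 < T^2/(2*x - T)^2 := by positivity
    have h3 : Real.log (1 - T^2/(2*x - T)^2) < 0 :=
      Real.log_neg (hpos x hx) (by linarith)
    have h4 : 0 < T/(2*(2*x - T)) := by positivity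
    have h5 : 0 ≤ K/(4*(2*x - T)) := by positivity
    linarith
  · intro x hx y hy hxy
    have hx : T < x := hx
    have hy : T < y := hy
    rw [hΔV x hx, hΔV y hy]
    have h1 : 0 < 2*x - T := by linarith
    have h1' : 2*x - T < 2*y - T := by linarith
    have h2 : T^2/(2*y - T)^2 < T^2/(2*x - T)^2 := by gcongr
    have h3 : Real.log (1 - T^2/(2*x - T)^2) < Real.log (1 - T^2/(2*y - T)^2) :=
      Real.log_lt_log (hpos x hx) (by linarith)
    have h4 : T/(2*(2*y - T)) < T/(2*(2*x - T)) := by gcongr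
    have h5 : K/(4*(2*y - T)) ≤ K/(4*(2*x - T)) := by gcongr
    linarith
  · have hg : Tendsto (fun x : ℝ => 2*x - T) atTop atTop :=
      tendsto_atTop_add_const_right _ (-T) (tendsto_id.const_mul_atTop (by norm_num : (0:ℝ) < 2))
    have ha : Tendsto (fun x : ℝ => T^2/(2*x - T)^2) atTop (nhds 0) :=
      tendsto_const_nhds.div_atTop ((tendsto_pow_atTop two_ne_zero).comp hg)
    have hb : Tendsto (fun x : ℝ => T/(2*(2*x - T))) atTop (nhds 0) :=
      tendsto_const_nhds.div_atTop (hg.const_mul_atTop (by norm_num))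
    have hc : Tendsto (fun x : ℝ => K/(4*(2*x - T))) atTop (nhds 0) :=
      tendsto_const_nhds.div_atTop (hg.const_mul_atTop (by norm_num))
    have hl : Tendsto (fun x : ℝ => Real.log (1 - T^2/(2*x - T)^2)) atTop (nhds 0) := by
      have := (tendsto_const_nhds (x := (1:ℝ))).sub ha
      have h := this.log (by norm_num)
      simpa using h
    have h := ((hl.const_mul (-(1/2))).add hb).add hc
    simp only [mul_zero, add_zero] at h
    refine h.congr' ?_
    filter_upwards [eventually_gt_atTop T] with x hx
    exact (hΔV x hx).symm
end

section
/- For all T₀ > T > 0, all ρ ∈ (−1,1), and all square-integrable measurable functions ι, c : [0,T] → ℝ, the following inequality holds: (1/2)·log((1 − T²/(2T₀−T)²)^{−1}) + T/(2(2T₀−T)) − (1/2)·log(T₀/(T₀−T)) + (1/(4(2T₀−T)))·(∫₀^T c(t) dt)² − (1/4)·∫₀^T [ι(t)² + (c(t) + ρ·ι(t))²/(1−ρ²)] dt ≤ 0. -/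
open MeasureTheory Set

/-- **Ambiguity aversion cannot beat ambiguity neutrality under the same insider information.**
For all `T₀ > T > 0`, `ρ ∈ (−1,1)` and square-integrable measurable `ι, c : [0,T] → ℝ`:
`(1/2)log((1 − T²/(2T₀−T)²)⁻¹) + T/(2(2T₀−T)) − (1/2)log(T₀/(T₀−T))
 + (1/(4(2T₀−T)))(∫₀^T c)² − (1/4)∫₀^T [ι² + (c+ρι)²/(1−ρ²)] ≤ 0`. -/
theorem robust_value_le_neutral_value_with_insider
    (T T₀ ρ : ℝ) (hT : 0 < T) (hTT₀ : T < T₀)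
    (hρ₁ : -1 < ρ) (hρ₂ : ρ < 1)
    (ι c : ℝ → ℝ) (hι : Measurable ι) (hc : Measurable c)
    (hι2 : IntegrableOn (fun t => (ι t)^2) (Icc 0 T))
    (hc2 : IntegrableOn (fun t => (c t)^2) (Icc 0 T)) :
    (1/2) * Real.log ((1 - T^2/(2*T₀ - T)^2)⁻¹) + T/(2*(2*T₀ - T))
        - (1/2) * Real.log (T₀/(T₀ - T))
        + (1/(4*(2*T₀ - T))) * (∫ t in Icc 0 T, c t)^2
        - (1/4) * (∫ t in Icc 0 T, ((ι t)^2 + (c t + ρ * ι t)^2/(1 - ρ^2)))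
      ≤ 0 := by
  have hS : 0 < 2 * T₀ - T := by linarith
  have hd : 0 < T₀ - T := by linarith
  have hT₀ : 0 < T₀ := by linarith
  have hr : 0 < 1 - ρ ^ 2 := by nlinarith
  have hlog : (1/2) * Real.log ((1 - T^2/(2*T₀ - T)^2)⁻¹) + T/(2*(2*T₀ - T))
        - (1/2) * Real.log (T₀/(T₀ - T)) ≤ 0 := by
    have e1 : (1 - T^2/(2*T₀ - T)^2)⁻¹ = (2*T₀/(2*T₀ - T))⁻¹ ^ 2 * (T₀ / (T₀ - T)) := by
      have : 1 - T^2/(2*T₀ - T)^2 = 4 * T₀ * (T₀ - T) / (2*T₀ - T)^2 := by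
        field_simp
        ring
      rw [this]
      field_simp
      try ring
    have hp : 0 < 2*T₀/(2*T₀ - T) := by positivity
    have hl := Real.one_sub_inv_le_log_of_pos hp
    have e2 : 1 - (2*T₀/(2*T₀ - T))⁻¹ = T / (2 * T₀) := by
      field_simp
      ring
    have h3 : T / (2*(2*T₀ - T)) ≤ T / (2 * T₀) :=
      div_le_div_of_nonneg_left hT.le (by positivity) (by linarith)
    rw [e1, Real.log_mul (by positivity) (by positivity), Real.log_pow, Real.log_inv]
    push_cast
    linarith
  have mc : MemLp c 2 (volume.restrict (Icc 0 T)) :=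
    (memLp_two_iff_integrable_sq hc.aestronglyMeasurable).2 hc2
  have mi : MemLp ι 2 (volume.restrict (Icc 0 T)) :=
    (memLp_two_iff_integrable_sq hι.aestronglyMeasurable).2 hι2
  have ic : Integrable c (volume.restrict (Icc 0 T)) := mc.integrable (by norm_num)
  have isq : Integrable (fun t => (c t + ρ * ι t)^2) (volume.restrict (Icc 0 T)) :=
    (mc.add (mi.const_mul ρ)).integrable_sq
  have hmono : ∫ t in Icc 0 T, (c t)^2 ≤
      ∫ t in Icc 0 T, ((ι t)^2 + (c t + ρ * ι t)^2/(1 - ρ^2)) := by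
    refine integral_mono hc2 (hι2.add (isq.div_const _)) fun t => ?_
    have e : (ι t)^2 + (c t + ρ * ι t)^2/(1 - ρ^2) - (c t)^2
        = (ι t + ρ * c t)^2 / (1 - ρ^2) := by
      field_simp
      ring
    have : 0 ≤ (ι t + ρ * c t)^2 / (1 - ρ^2) := by positivity
    show (c t)^2 ≤ (ι t)^2 + (c t + ρ * ι t)^2/(1 - ρ^2)
    linarith
  have hCS : (∫ t in Icc 0 T, c t)^2 ≤ T * ∫ t in Icc 0 T, (c t)^2 := by
    set m := ∫ t in Icc 0 T, c t with hm
    have h0 : 0 ≤ ∫ t in Icc 0 T, (T * c t - m)^2 := integral_nonneg fun t => sq_nonneg _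
    have e : ∫ t in Icc 0 T, (T * c t - m)^2
        = T^2 * (∫ t in Icc 0 T, (c t)^2) - 2 * T * m * m + T * m^2 := by
      have : (fun t => (T * c t - m)^2)
          = fun t => T^2 * (c t)^2 - 2 * T * m * c t + m^2 := by
        funext t
        ring
      have j1 : Integrable (fun t => T^2 * (c t)^2) (volume.restrict (Icc 0 T)) :=
        Integrable.const_mul hc2 _
      have j2 : Integrable (fun t => 2 * T * m * c t) (volume.restrict (Icc 0 T)) :=
        ic.const_mul _
      have j3 : Integrable (fun t => T^2 * (c t)^2 - 2 * T * m * c t)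
          (volume.restrict (Icc 0 T)) := j1.sub j2
      rw [this, integral_add j3 (integrable_const _), integral_sub j1 j2,
        integral_const_mul, integral_const_mul, ← hm]
      simp [hT.le]
    rw [e] at h0
    have : 0 ≤ T * (T * (∫ t in Icc 0 T, (c t)^2) - m^2) := by linarith
    have := nonneg_of_mul_nonneg_right this hT
    linarith
  have hn : 0 ≤ ∫ t in Icc 0 T, (c t)^2 := integral_nonneg fun t => sq_nonneg _
  have h4 : (1/(4*(2*T₀ - T))) * (∫ t in Icc 0 T, c t)^2
      ≤ (1/4) * ∫ t in Icc 0 T, (c t)^2 := by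
    rw [one_div_mul_eq_div, div_le_iff₀ (by positivity)]
    nlinarith
  linarith
end

section
/- Let ι ∈ ℝ and c > 0. Then the equation ι² + c² − (c² + 2)/(2T₀ − 1) = −2·log(1 − 1/(2T₀−1)²) has exactly one solution T₀* in (1, ∞). Moreover, T₀* is strictly decreasing in ι²: if ι₁² < ι₂² and T₀*(ι₁), T₀*(ι₂) denote the corresponding unique solutions (with the same c), then T₀*(ι₂) < T₀*(ι₁). -/
open Set

lemma gaux_lt (a x y : ℝ) (ha : 0 < a) (hx : 0 < x) (hxy : x < y) (hy : y < 1) :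
    a * x - 2 * Real.log (1 - x^2) < a * y - 2 * Real.log (1 - y^2) := by
  have h1 : Real.log (1 - y^2) < Real.log (1 - x^2) :=
    Real.log_lt_log (by nlinarith) (by nlinarith)
  have h2 : a * x < a * y := mul_lt_mul_of_pos_left hxy ha
  linarith

lemma gaux_T (a K T S L : ℝ) (ha : 0 < a) (hT : 1 < T) (hTS : T < S)
    (h1 : K - a / (2*T - 1) = -2 * Real.log (1 - 1/(2*T - 1)^2))
    (h2 : L - a / (2*S - 1) = -2 * Real.log (1 - 1/(2*S - 1)^2)) : L < K := by
  have hS : 0 < 1 / (2*S - 1) := by apply one_div_pos.2; linarith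
  have hST : 1 / (2*S - 1) < 1 / (2*T - 1) :=
    one_div_lt_one_div_of_lt (by linarith) (by linarith)
  have hT1 : 1 / (2*T - 1) < 1 := by rw [div_lt_one] <;> linarith
  have := gaux_lt a _ _ ha hS hST hT1
  rw [one_div_pow, one_div_pow, mul_one_div, mul_one_div] at this
  linarith

lemma gaux_ex (a K : ℝ) (ha : 0 < a) (hK : 0 < K) : ∃ T : ℝ, 1 < T ∧
    K - a / (2*T - 1) = -2 * Real.log (1 - 1/(2*T - 1)^2) := by
  have he : Real.exp (-K/2) < 1 := by rw [Real.exp_lt_one_iff]; linarith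
  have he0 := Real.exp_pos (-K/2)
  set z := Real.sqrt (1 - Real.exp (-K/2)) with hz
  have hz2 : z^2 = 1 - Real.exp (-K/2) := Real.sq_sqrt (by linarith)
  have hz0 : 0 ≤ z := Real.sqrt_nonneg _
  have hz1 : z < 1 := by nlinarith
  have hcont : ContinuousOn (fun x : ℝ => a * x - 2 * Real.log (1 - x^2)) (Icc 0 z) := by
    apply ContinuousOn.sub (by fun_prop)
    apply ContinuousOn.mul (by fun_prop)
    apply ContinuousOn.log (by fun_prop)
    intro x hx
    have := hx.1
    have := hx.2
    nlinarith
  have hmem : K ∈ Icc ((fun x : ℝ => a * x - 2 * Real.log (1 - x^2)) 0)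
      ((fun x : ℝ => a * x - 2 * Real.log (1 - x^2)) z) := by
    constructor
    · simp [hK.le]
    · simp only [hz2, sub_sub_cancel, Real.log_exp]
      nlinarith [mul_nonneg ha.le hz0]
  obtain ⟨x, hx, hxe⟩ := intermediate_value_Icc hz0 hcont hmem
  have hx0 : 0 < x := by
    rcases hx.1.lt_or_eq with h | h
    · exact h
    · subst h
      simp at hxe
      linarith
  have hx1 : x < 1 := lt_of_le_of_lt hx.2 hz1
  have h1 : 1 < 1 / x := by rwa [lt_div_iff₀ hx0, one_mul]
  refine ⟨(1 / x + 1) / 2, by linarith, ?_⟩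
  have : 2 * ((1 / x + 1) / 2) - 1 = 1 / x := by ring
  rw [this, one_div_pow, one_div_one_div, div_div_eq_mul_div, div_one]
  simp only at hxe
  linarith

/-- **Existence, uniqueness and monotonicity of the critical future time.**
For `ι ∈ ℝ` and `c > 0`, the equation
`ι² + c² − (c²+2)/(2T₀−1) = −2·log(1 − 1/(2T₀−1)²)` has exactly one solution
`T₀* ∈ (1,∞)`; moreover `T₀*` is strictly decreasing in `ι²`: if `ι₁² < ι₂²`
(with the same `c`), then the corresponding solutions satisfy `T₀*(ι₂) < T₀*(ι₁)`. -/
theorem critical_future_time_exists_unique_antitone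
    (c : ℝ) (hc : 0 < c) :
    (∀ ι : ℝ, ∃! T₀ : ℝ, T₀ ∈ Ioi (1:ℝ) ∧
      ι^2 + c^2 - (c^2 + 2)/(2*T₀ - 1)
        = -2 * Real.log (1 - 1/(2*T₀ - 1)^2)) ∧
    (∀ ι₁ ι₂ T₁ T₂ : ℝ, ι₁^2 < ι₂^2 →
      T₁ ∈ Ioi (1:ℝ) → T₂ ∈ Ioi (1:ℝ) →
      ι₁^2 + c^2 - (c^2 + 2)/(2*T₁ - 1)
        = -2 * Real.log (1 - 1/(2*T₁ - 1)^2) →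
      ι₂^2 + c^2 - (c^2 + 2)/(2*T₂ - 1)
        = -2 * Real.log (1 - 1/(2*T₂ - 1)^2) →
      T₂ < T₁) := by
  have ha : 0 < c^2 + 2 := by positivity
  constructor
  · intro ι
    obtain ⟨T, hT, he⟩ := gaux_ex (c^2+2) (ι^2 + c^2) ha (by positivity)
    refine ⟨T, ⟨hT, he⟩, ?_⟩
    rintro S ⟨hS, hSe⟩
    rcases lt_trichotomy S T with h | h | h
    · exact absurd (gaux_T _ _ _ _ _ ha hS h hSe he) (lt_irrefl _)
    · exact h
    · exact absurd (gaux_T _ _ _ _ _ ha hT h he hSe) (lt_irrefl _)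
  · intro ι₁ ι₂ T₁ T₂ hι hT₁ hT₂ h₁ h₂
    rcases lt_trichotomy T₂ T₁ with h | h | h
    · exact h
    · subst h
      linarith
    · have := gaux_T _ _ _ _ _ ha hT₁ h h₁ h₂
      linarith
end
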